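/- Let N ∈ ℕ and let q, b, t ∈ ℂ satisfy t ≠ 0, (q;q)_N ≠ 0 and (t;q)_{N+1} ≠ 0. Then F_N(b/t, 0; t) = (1−tq^N)/(1−t) · Σ_{n=0}^{N} [N,n]_q (q;q)_n (−b)^n q^{n(n+1)/2} / (tq;q)_n. -/

import Mathlib

/-!
Since `[N,n]_q (q;q)_n` is the polynomial `∏_{j<n} (1 - q^(N-j))` (`qFall q N n` below), multiplying
the identity by `(t;q)_N` and using `(t;q)_N (1 - t q^N) / (1 - t) = (tq;q)_N` turns it into
the polynomial identity `fineL = fineR`, where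

* `fineL q b t N = ∑ qFall q N n · ∏_{j=1}^n (t - b q^j) · (t;q)_{N-n}`,
* `fineR q b t N = ∑ qFall q N n · (-b)^n q^(n(n+1)/2) · (t q^(n+1);q)_{N-n}`.

Both sides satisfy `X_{N+1}(b) = (t;q)_{N+1} + (1 - q^(N+1)) (t - b q) X_N(b q)`: for `fineL` this is
splitting off the term `n = 0`, for `fineR` it follows by comparing coefficients of powers of `b`.
Induction on `N`, with `b` varying, finishes the proof.
-/

open Finset

/-- The q-Pochhammer symbol (z; q)_n = prod_{j=0}^{n-1} (1 - z q^j). -/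
noncomputable def qPoch (q z : ℂ) (n : ℕ) : ℂ :=
  ∏ j ∈ Finset.range n, (1 - z * q ^ j)

/-- The Gaussian binomial coefficient [N, n]_q = (q;q)_N / ((q;q)_n (q;q)_{N-n}). -/
noncomputable def qBinom (q : ℂ) (N n : ℕ) : ℂ :=
  qPoch q q N / (qPoch q q n * qPoch q q (N - n))

/-- The finite analogue of Fine's function,
F_N(a, b; t) = sum_{n=0}^{N} [N,n]_q (aq;q)_n (t;q)_{N-n} (q;q)_n t^n / ((bq;q)_n (t;q)_N). -/
noncomputable def fineF (q a b t : ℂ) (N : ℕ) : ℂ :=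
  ∑ n ∈ Finset.range (N + 1),
    qBinom q N n * (qPoch q (a * q) n * qPoch q t (N - n) * qPoch q q n * t ^ n) /
      (qPoch q (b * q) n * qPoch q t N)

/-- The product `(1 - q^N)(1 - q^(N-1)) ⋯ (1 - q^(N-n+1)) = (q;q)_N / (q;q)_{N-n}`. It vanishes
for `n = N + 1`, because of the factor `j = N`. -/
noncomputable def qFall (q : ℂ) (N n : ℕ) : ℂ :=
  ∏ j ∈ Finset.range n, (1 - q ^ (N - j))

/-- The left-hand side multiplied by `(t;q)_N`; the product over `j` is
`t^n (bq/t;q)_n`, freed of its denominators. -/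
noncomputable def fineL (q b t : ℂ) (N : ℕ) : ℂ :=
  ∑ n ∈ Finset.range (N + 1),
    qFall q N n * (∏ j ∈ Finset.range n, (t - b * q ^ (j + 1))) * qPoch q t (N - n)

/-- The right-hand side multiplied by `(t;q)_N`. -/
noncomputable def fineR (q b t : ℂ) (N : ℕ) : ℂ :=
  ∑ n ∈ Finset.range (N + 1),
    qFall q N n * ((-b) ^ n * q ^ (n * (n + 1) / 2)) * qPoch q (t * q ^ (n + 1)) (N - n)

lemma qFall_succ (q : ℂ) (N n : ℕ) : qFall q N (n + 1) = qFall q N n * (1 - q ^ (N - n)) :=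
  Finset.prod_range_succ _ _

lemma qFall_succ_succ (q : ℂ) (N n : ℕ) :
    qFall q (N + 1) (n + 1) = (1 - q ^ (N + 1)) * qFall q N n := by
  simp only [qFall, Finset.prod_range_succ', Nat.add_sub_add_right, Nat.sub_zero]
  ring

lemma qPoch_succ (q z : ℂ) (n : ℕ) : qPoch q z (n + 1) = qPoch q z n * (1 - z * q ^ n) :=
  Finset.prod_range_succ _ _

lemma qPoch_add (q z : ℂ) (n m : ℕ) :
    qPoch q z (n + m) = qPoch q z n * qPoch q (z * q ^ n) m := by
  simp only [qPoch, Finset.prod_range_add, pow_add, mul_assoc]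

lemma qPoch_succ' (q z : ℂ) (n : ℕ) : qPoch q z (n + 1) = (1 - z) * qPoch q (z * q) n := by
  rw [add_comm, qPoch_add]
  simp [qPoch]

lemma qFall_mul_qPoch (q : ℂ) (n m : ℕ) :
    qFall q (n + m) n * qPoch q q m = qPoch q q (n + m) := by
  induction n with
  | zero => simp [qFall]
  | succ n ih =>
    rw [show n + 1 + m = n + m + 1 by ring, qFall_succ_succ, qPoch_succ, ← ih]
    ring

lemma triangle_succ (n : ℕ) : (n + 1) * (n + 1 + 1) / 2 = n * (n + 1) / 2 + (n + 1) := by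
  rw [show (n + 1) * (n + 1 + 1) = n * (n + 1) + (n + 1) * 2 by ring,
    Nat.add_mul_div_right _ _ two_pos]

lemma fineL_succ (q b t : ℂ) (N : ℕ) :
    fineL q b t (N + 1) =
      qPoch q t (N + 1) + (1 - q ^ (N + 1)) * (t - b * q) * fineL q (b * q) t N := by
  rw [fineL, Finset.sum_range_succ', add_comm, fineL, Finset.mul_sum]
  congr 1
  · simp [qFall]
  · refine Finset.sum_congr rfl fun n _ => ?_
    rw [qFall_succ_succ, Finset.prod_range_succ', Nat.add_sub_add_right,
      Finset.prod_congr rfl fun j _ =>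
        show t - b * q ^ (j + 1 + 1) = t - b * q * q ^ (j + 1) by ring]
    ring

/-- Comparison of the coefficients of `b^(n+1)` in the recursion for `fineR`. -/
lemma fineR_term (q b t : ℂ) {N n : ℕ} (hn : n ≤ N) :
    qFall q (N + 1) (n + 1) * ((-b) ^ (n + 1) * q ^ ((n + 1) * (n + 1 + 1) / 2)) *
        qPoch q (t * q ^ (n + 1 + 1)) (N - n) =
      (1 - q ^ (N + 1)) * t *
          (qFall q N (n + 1) * ((-(b * q)) ^ (n + 1) * q ^ ((n + 1) * (n + 1 + 1) / 2)) *
            qPoch q (t * q ^ (n + 1 + 1)) (N - (n + 1))) +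
        (1 - q ^ (N + 1)) * (-(b * q)) *
          (qFall q N n * ((-(b * q)) ^ n * q ^ (n * (n + 1) / 2)) *
            qPoch q (t * q ^ (n + 1)) (N - n)) := by
  rw [qFall_succ_succ, qFall_succ, triangle_succ]
  generalize n * (n + 1) / 2 = T
  have hb : (-(b * q)) ^ n = (-b) ^ n * q ^ n := by rw [← mul_pow]; ring
  rw [pow_succ (-(b * q)) n, hb]
  obtain ⟨m, rfl⟩ := Nat.exists_eq_add_of_le hn
  rcases m with _ | m
  · simp [qPoch]
    ring
  · rw [show n + (m + 1) - n = m + 1 by omega, show n + (m + 1) - (n + 1) = m by omega,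
      qPoch_succ, qPoch_succ' q (t * q ^ (n + 1)),
      show t * q ^ (n + 1) * q = t * q ^ (n + 1 + 1) by ring]
    ring

lemma fineR_succ (q b t : ℂ) (N : ℕ) :
    fineR q b t (N + 1) =
      qPoch q t (N + 1) + (1 - q ^ (N + 1)) * (t - b * q) * fineR q (b * q) t N := by
  -- The vanishing term `n = N + 1` is added to align the two sums.
  have hpad : fineR q (b * q) t N = ∑ n ∈ Finset.range (N + 1 + 1),
      qFall q N n * ((-(b * q)) ^ n * q ^ (n * (n + 1) / 2)) *
        qPoch q (t * q ^ (n + 1)) (N - n) := by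
    rw [Finset.sum_range_succ _ (N + 1), qFall_succ, fineR]
    simp
  rw [Finset.sum_range_succ'] at hpad
  have hzero : qPoch q (t * q) (N + 1) =
      qPoch q t (N + 1) + (1 - q ^ (N + 1)) * t * qPoch q (t * q) N := by
    rw [qPoch_succ, qPoch_succ' q t]
    ring
  have hsplit : (1 - q ^ (N + 1)) * (t - b * q) * fineR q (b * q) t N =
      (1 - q ^ (N + 1)) * t * fineR q (b * q) t N +
        (1 - q ^ (N + 1)) * (-(b * q)) * fineR q (b * q) t N := by ring
  rw [hsplit]
  nth_rw 1 [hpad]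
  rw [fineR, Finset.sum_range_succ', fineR]
  simp only [Nat.add_sub_add_right]
  rw [Finset.sum_congr rfl fun n hn =>
    fineR_term q b t (Finset.mem_range_succ_iff.mp hn), Finset.sum_add_distrib,
    ← Finset.mul_sum, ← Finset.mul_sum]
  simp only [qFall, Finset.prod_range_zero, pow_zero, zero_mul, Nat.zero_div, zero_add, pow_one,
    Nat.sub_zero, one_mul, hzero]
  ring

lemma fineL_eq_fineR (q t : ℂ) (N : ℕ) : ∀ b : ℂ, fineL q b t N = fineR q b t N := by
  induction N with
  | zero => intro b; simp [fineL, fineR, qFall, qPoch]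
  | succ N ih => intro b; rw [fineL_succ, fineR_succ, ih]

lemma qPoch_ne_zero_of_le {q z : ℂ} {n N : ℕ} (h : qPoch q z N ≠ 0) (hn : n ≤ N) :
    qPoch q z n ≠ 0 := by
  obtain ⟨m, rfl⟩ := Nat.exists_eq_add_of_le hn
  rw [qPoch_add] at h
  exact left_ne_zero_of_mul h

lemma qBinom_mul_qPoch {q : ℂ} {N n : ℕ} (hq : qPoch q q N ≠ 0) (hn : n ≤ N) :
    qBinom q N n * qPoch q q n = qFall q N n := by
  have h1 := qPoch_ne_zero_of_le hq hn
  have h2 := qPoch_ne_zero_of_le hq (Nat.sub_le N n)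
  have h3 := qFall_mul_qPoch q n (N - n)
  rw [Nat.add_sub_cancel' hn] at h3
  rw [qBinom, ← h3]
  field_simp

theorem fineF_bt_zero_second (N : ℕ) (q b t : ℂ) (ht0 : t ≠ 0)
    (hq : qPoch q q N ≠ 0) (ht : qPoch q t (N + 1) ≠ 0) :
    fineF q (b / t) 0 t N =
      (1 - t * q ^ N) / (1 - t) *
        ∑ n ∈ Finset.range (N + 1),
          qBinom q N n * (qPoch q q n * (-b) ^ n * q ^ (n * (n + 1) / 2)) /
            qPoch q (t * q) n := by
  have htN : qPoch q t N ≠ 0 := qPoch_ne_zero_of_le ht N.le_succ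
  have ht' := ht
  rw [qPoch_succ'] at ht'
  have h1t : 1 - t ≠ 0 := left_ne_zero_of_mul ht'
  have htq : qPoch q (t * q) N ≠ 0 := right_ne_zero_of_mul ht'
  have hL : fineF q (b / t) 0 t N = fineL q b t N / qPoch q t N := by
    rw [fineF, fineL, Finset.sum_div]
    refine Finset.sum_congr rfl fun n hn => ?_
    have hprod : qPoch q (b / t * q) n * t ^ n =
        ∏ j ∈ Finset.range n, (t - b * q ^ (j + 1)) := by
      rw [qPoch, Finset.pow_eq_prod_const, ← Finset.prod_mul_distrib]
      refine Finset.prod_congr rfl fun j _ => ?_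
      field_simp
      ring
    have h0 : qPoch q (0 * q) n = 1 := by simp [qPoch]
    rw [← qBinom_mul_qPoch hq (Finset.mem_range_succ_iff.mp hn), ← hprod, h0]
    ring
  have hR : qPoch q (t * q) N * (∑ n ∈ Finset.range (N + 1),
      qBinom q N n * (qPoch q q n * (-b) ^ n * q ^ (n * (n + 1) / 2)) / qPoch q (t * q) n) =
      fineR q b t N := by
    rw [fineR, Finset.mul_sum]
    refine Finset.sum_congr rfl fun n hn => ?_
    have hn' : n ≤ N := Finset.mem_range_succ_iff.mp hn
    have hne := qPoch_ne_zero_of_le htq hn'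
    have hadd := qPoch_add q (t * q) n (N - n)
    rw [Nat.add_sub_cancel' hn', show t * q * q ^ n = t * q ^ (n + 1) by ring] at hadd
    rw [← qBinom_mul_qPoch hq hn', hadd]
    field_simp
  have hshift : (1 - t) * qPoch q (t * q) N = qPoch q t N * (1 - t * q ^ N) := by
    rw [← qPoch_succ', qPoch_succ]
  rw [hL, fineL_eq_fineR, ← hR, div_mul_eq_mul_div, div_eq_div_iff htN h1t]
  linear_combination (∑ n ∈ Finset.range (N + 1),
    qBinom q N n * (qPoch q q n * (-b) ^ n * q ^ (n * (n + 1) / 2)) / qPoch q (t * q) n) * hshift
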